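/- arXiv:1710.01836 — 3 statements merged into one kernel-verified Lean document; each statement's English description precedes it below -/
import Mathlib

section
/- Let X₁, X₂ : ℝⁿ → ℝⁿ be continuous vector fields and let Φ¹, Φ² : ℝ × ℝⁿ → ℝⁿ be C¹ flows of X₁ and X₂ respectively (so Φⁱ(0,x) = x, Φⁱ(t+s,x) = Φⁱ(t, Φⁱ(s,x)), and ∂ₜΦⁱ(t,x) = Xᵢ(Φⁱ(t,x))). Then for every x ∈ ℝⁿ and t ≥ 0, the pseudo-linearization integral identity holds: ∫₀ᵗ (D_xΦ²)(t−s, Φ¹(s,x)) ((X₁ − X₂)(Φ¹(s,x))) ds = Φ¹(t,x) − Φ²(t,x), where D_xΦ² denotes the Fréchet derivative of Φ² in the x-variable. -/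
/-!
Transport the point `Φ¹(s,x)` by `Φ²` for the remaining time: the curve `s ↦ Φ²(t−s, Φ¹(s,x))`
joins `Φ²(t,x)` to `Φ¹(t,x)`. The group law gives `∂ₜΦ²(t,y) = D_yΦ²(t,y) X₂(y)`, so the velocity of
this curve is `D_xΦ²(t−s, Φ¹(s,x))` applied to `(X₁ − X₂)(Φ¹(s,x))`, and the identity is the
fundamental theorem of calculus. Nothing but the velocity of `s ↦ Φ¹(s,x)` enters, so the argument
gives the autonomous Alekseev–Gröbner formula for a differentiable curve in place of an orbit of
`Φ¹`.
-/

section ParametrizedMaps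

variable {𝕜 E F : Type*} [NontriviallyNormedField 𝕜] [NormedAddCommGroup E] [NormedSpace 𝕜 E]
  [NormedAddCommGroup F] [NormedSpace 𝕜 F]

open Function

theorem hasDerivAt_uncurry_comp {f : 𝕜 → E → F} {c : 𝕜 → 𝕜} {γ : 𝕜 → E} {s c' : 𝕜} {γ' : E} {v : F}
    (hf : DifferentiableAt 𝕜 (uncurry f) (c s, γ s))
    (hv : HasDerivAt (fun τ => f τ (γ s)) v (c s))
    (hc : HasDerivAt c c' s) (hγ : HasDerivAt γ γ' s) :
    HasDerivAt (fun σ => f (c σ) (γ σ)) (c' • v + fderiv 𝕜 (f (c s)) (γ s) γ') s := by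
  set L := fderiv 𝕜 (uncurry f) (c s, γ s)
  have hD : HasFDerivAt (uncurry f) L (c s, γ s) := hf.hasFDerivAt
  have h_time : L (1, 0) = v := by
    have h_line : HasDerivAt (fun τ => (τ, γ s)) ((1 : 𝕜), (0 : E)) (c s) :=
      (hasDerivAt_id _).prodMk (hasDerivAt_const _ _)
    have h := hD.comp_hasDerivAt (c s) h_line
    exact h.unique hv
  have h_space : fderiv 𝕜 (f (c s)) (γ s) γ' = L (0, γ') := by
    have h : HasFDerivAt (f (c s)) (L.comp (.inr 𝕜 𝕜 E)) (γ s) :=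
      hD.comp (γ s) (hasFDerivAt_prodMk_right (c s) (γ s))
    simp [h.fderiv]
  refine (hD.comp_hasDerivAt s (hc.prodMk hγ)).congr_deriv ?_
  calc L (c', γ') = L (c' • (1, 0) + (0, γ')) := by simp
    _ = c' • v + fderiv 𝕜 (f (c s)) (γ s) γ' := by rw [map_add, map_smul, h_time, h_space]

theorem continuous_of_hasDerivAt_of_contDiff_uncurry {f : 𝕜 → E → F} {X : E → F} {t : 𝕜}
    (hf : ContDiff 𝕜 1 (uncurry f)) (hX : ∀ x, HasDerivAt (fun τ => f τ x) (X x) t) :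
    Continuous X := by
  have hX_eq : X = fun x => fderiv 𝕜 (fun τ => f τ x) t 1 :=
    funext fun x => by rw [fderiv_apply_one_eq_deriv, (hX x).deriv]
  rw [hX_eq]
  exact (ContDiff.fderiv_apply (f := fun x τ => f τ x) (n := 0)
    (hf.comp (contDiff_snd.prodMk contDiff_fst)) contDiff_const contDiff_const
    (zero_add 1).le).continuous

theorem continuous_fderiv_of_contDiff_uncurry
    {P : Type*} [NormedAddCommGroup P] [NormedSpace 𝕜 P] {f : P → E → F}
    (hf : ContDiff 𝕜 1 (uncurry f)) :
    Continuous fun p : P × E => fderiv 𝕜 (f p.1) p.2 :=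
  (ContDiff.fderiv (f := fun p : P × E => f p.1) (n := 0)
    (hf.comp (contDiff_fst.fst.prodMk contDiff_snd)) contDiff_snd (zero_add 1).le).continuous

end ParametrizedMaps

open Set MeasureTheory in
theorem intervalIntegrable_clm_apply {𝕜 E F : Type*} [NontriviallyNormedField 𝕜]
    [NormedAddCommGroup E] [NormedSpace 𝕜 E] [NormedAddCommGroup F] [NormedSpace 𝕜 F]
    {L : ℝ → E →L[𝕜] F} {g : ℝ → E} {a b : ℝ}
    {μ : Measure ℝ} (hL : ContinuousOn L (uIcc a b)) (hg : IntervalIntegrable g μ a b) :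
    IntervalIntegrable (fun s => L s (g s)) μ a b := by
  obtain ⟨C, hC⟩ := isCompact_uIcc.exists_bound_of_continuousOn hL
  rw [intervalIntegrable_iff] at hg ⊢
  have hL_meas : AEStronglyMeasurable L (μ.restrict (uIoc a b)) :=
    (hL.mono uIoc_subset_uIcc).aestronglyMeasurable measurableSet_uIoc
  have hL_bound : ∀ᵐ s ∂μ.restrict (uIoc a b), ‖L s‖ ≤ C :=
    ae_restrict_of_forall_mem measurableSet_uIoc fun s hs => hC s (uIoc_subset_uIcc hs)
  exact (ContinuousLinearMap.id 𝕜 (E →L[𝕜] F)).integrable_of_bilin_of_bdd_left C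
    hL_meas hL_bound hg

section Flow

open Function

variable {𝕜 E : Type*} [NontriviallyNormedField 𝕜] [NormedAddCommGroup E] [NormedSpace 𝕜 E]
  {φ : Flow 𝕜 E}

theorem hasDerivAt_flow {t : 𝕜} {x v : E} (hφ : DifferentiableAt 𝕜 (φ t) x)
    (hv : HasDerivAt (fun τ => φ τ x) v 0) :
    HasDerivAt (fun τ => φ τ x) (fderiv 𝕜 (φ t) x v) t := by
  have hφ₀ : HasFDerivAt (φ t) (fderiv 𝕜 (φ t) x) (φ 0 x) := by
    simpa only [φ.map_zero_apply] using hφ.hasFDerivAt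
  have h_shift : HasDerivAt (fun σ => φ (t + σ) x) (fderiv 𝕜 (φ t) x v) 0 := by
    simpa only [φ.map_add, comp_def] using hφ₀.comp_hasDerivAt (0 : 𝕜) hv
  rw [← sub_self t] at h_shift
  simpa only [add_sub_cancel] using h_shift.comp_sub_const t t

theorem hasDerivAt_flow_sub_apply {t s : 𝕜} {γ : 𝕜 → E} {γ' v : E}
    (hφ : DifferentiableAt 𝕜 (uncurry φ) (t - s, γ s))
    (hv : HasDerivAt (fun τ => φ τ (γ s)) v 0) (hγ : HasDerivAt γ γ' s) :
    HasDerivAt (fun σ => φ (t - σ) (γ σ)) (fderiv 𝕜 (φ (t - s)) (γ s) (γ' - v)) s := by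
  have hφ_space : DifferentiableAt 𝕜 (φ (t - s)) (γ s) :=
    hφ.comp (γ s) (hasFDerivAt_prodMk_right (t - s) (γ s)).differentiableAt
  refine (hasDerivAt_uncurry_comp hφ (hasDerivAt_flow hφ_space hv)
    ((hasDerivAt_id s).const_sub t) hγ).congr_deriv ?_
  rw [map_sub, neg_one_smul, neg_add_eq_sub]

end Flow

open Function Set MeasureTheory in
theorem pseudo_linearization_integral_identity_general {E : Type*} [NormedAddCommGroup E]
    [NormedSpace ℝ E] [CompleteSpace E] (φ : Flow ℝ E) {X : E → E} {γ γ' : ℝ → E} {a b : ℝ}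
    (hφ : ContDiff ℝ 1 (uncurry φ))
    (hX : ∀ x, HasDerivAt (fun τ => φ τ x) (X x) 0)
    (hγ : ∀ s ∈ uIcc a b, HasDerivAt γ (γ' s) s)
    (hγ' : IntervalIntegrable γ' volume a b) :
    ∫ s in a..b, fderiv ℝ (φ (b - s)) (γ s) (γ' s - X (γ s)) = γ b - φ (b - a) (γ a) := by
  have hγ_cont : ContinuousOn γ (uIcc a b) := HasDerivAt.continuousOn hγ
  have hX_cont : Continuous X := continuous_of_hasDerivAt_of_contDiff_uncurry hφ hX
  have hD_cont : ContinuousOn (fun s => fderiv ℝ (φ (b - s)) (γ s)) (uIcc a b) :=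
    (continuous_fderiv_of_contDiff_uncurry hφ).comp_continuousOn
      ((continuousOn_const.sub continuousOn_id).prodMk hγ_cont)
  have h_int : IntervalIntegrable (fun s => fderiv ℝ (φ (b - s)) (γ s) (γ' s - X (γ s)))
      volume a b :=
    intervalIntegrable_clm_apply hD_cont
      (hγ'.sub (hX_cont.comp_continuousOn hγ_cont).intervalIntegrable)
  rw [intervalIntegral.integral_eq_sub_of_hasDerivAt
    (fun s hs => hasDerivAt_flow_sub_apply (hφ.differentiable one_ne_zero _) (hX _) (hγ s hs))
    h_int, sub_self, φ.map_zero_apply]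

/-- Pseudo-linearization integral identity: if `Φ¹, Φ²` are `C¹` flows of continuous
vector fields `X₁, X₂` on `ℝⁿ`, then for every `x` and `t ≥ 0`,
`∫₀ᵗ (D_xΦ²)(t−s, Φ¹(s,x)) ((X₁ − X₂)(Φ¹(s,x))) ds = Φ¹(t,x) − Φ²(t,x)`. -/
theorem pseudo_linearization_integral_identity {n : ℕ}
    (X₁ X₂ : EuclideanSpace ℝ (Fin n) → EuclideanSpace ℝ (Fin n))
    (Φ₁ Φ₂ : ℝ → EuclideanSpace ℝ (Fin n) → EuclideanSpace ℝ (Fin n))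
    (hX₁ : Continuous X₁) (hX₂ : Continuous X₂)
    (hΦ₁ : ContDiff ℝ 1 (fun p : ℝ × EuclideanSpace ℝ (Fin n) => Φ₁ p.1 p.2))
    (hΦ₂ : ContDiff ℝ 1 (fun p : ℝ × EuclideanSpace ℝ (Fin n) => Φ₂ p.1 p.2))
    (h0₁ : ∀ x, Φ₁ 0 x = x) (h0₂ : ∀ x, Φ₂ 0 x = x)
    (hgroup₁ : ∀ t s x, Φ₁ (t + s) x = Φ₁ t (Φ₁ s x))
    (hgroup₂ : ∀ t s x, Φ₂ (t + s) x = Φ₂ t (Φ₂ s x))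
    (hflow₁ : ∀ t x, HasDerivAt (fun τ => Φ₁ τ x) (X₁ (Φ₁ t x)) t)
    (hflow₂ : ∀ t x, HasDerivAt (fun τ => Φ₂ τ x) (X₂ (Φ₂ t x)) t) :
    ∀ (x : EuclideanSpace ℝ (Fin n)) (t : ℝ), 0 ≤ t →
      ∫ s in (0 : ℝ)..t,
        fderiv ℝ (Φ₂ (t - s)) (Φ₁ s x) (X₁ (Φ₁ s x) - X₂ (Φ₁ s x))
      = Φ₁ t x - Φ₂ t x := by
  intro x t _
  let φ : Flow ℝ (EuclideanSpace ℝ (Fin n)) := ⟨Φ₂, hΦ₂.continuous, hgroup₂, h0₂⟩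
  have hγ_cont : Continuous fun s => Φ₁ s x := hΦ₁.continuous.comp (.prodMk_left x)
  simpa [φ, h0₁] using pseudo_linearization_integral_identity_general φ hΦ₂
    (fun y => by simpa only [h0₂] using hflow₂ 0 y) (fun s _ => hflow₁ s x)
    ((hX₁.comp hγ_cont).intervalIntegrable 0 t)
end

section
/- Let A_i : ℝⁿ → Matrix d d ℝ (i = 1,…,n) be C¹ maps with curvature components F_{ij} = ∂_i A_j − ∂_j A_i + A_i·A_j − A_j·A_i. Suppose γ : ℝ → ℝⁿ is twice differentiable and ξ : ℝ → Matrix d d ℝ is differentiable, and together they solve Wong's equations for A with the Euclidean metric and the Frobenius pairing ⟨X,Y⟩ = trace(Xᵀ·Y): namely γ''_i(t) = Σ_{j=1}^n trace(F_{ij}(γ(t))ᵀ·ξ(t))·γ'_j(t) for each i, and ξ'(t) = ξ(t)·a(t) − a(t)·ξ(t) where a(t) = Σ_{i=1}^n γ'_i(t)·A_i(γ(t)). Let u : ℝⁿ → Matrix d d ℝ be a C² map with u(x)ᵀ·u(x) = 1 for all x (orthogonal gauge), and define Ã_i(x) = u(x)ᵀ·(∂_i u)(x) + u(x)ᵀ·A_i(x)·u(x)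 with curvature F̃_{ij}, and ξ̃(t) = u(γ(t))ᵀ·ξ(t)·u(γ(t)). Then (γ, ξ̃) solves Wong's equations for Ã: γ''_i(t) = Σ_{j=1}^n trace(F̃_{ij}(γ(t))ᵀ·ξ̃(t))·γ'_j(t) for each i, and ξ̃'(t) = ξ̃(t)·ã(t) − ã(t)·ξ̃(t) where ã(t) = Σ_{i=1}^n γ'_i(t)·Ã_i(γ(t)). -/
attribute [local instance] Matrix.normedAddCommGroup Matrix.normedSpace

open Matrix

/-- The `i`-th partial derivative of a matrix-valued map on `ℝⁿ`. -/
noncomputable def pder {n d : ℕ} (i : Fin n)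
    (f : (Fin n → ℝ) → Matrix (Fin d) (Fin d) ℝ) (x : Fin n → ℝ) :
    Matrix (Fin d) (Fin d) ℝ :=
  fderiv ℝ f x (Pi.single i 1)

/-!
Under `Ã = u⁻¹ du + u⁻¹ A u` the second derivatives of `u` cancel from `dÃ` by symmetry, and the
remaining terms say that the curvature is conjugated, `F̃ = u⁻¹ F u`; conjugating the charge as well
leaves the force unchanged because the pairing is `Ad`-invariant. Along the trajectory,
`(u⁻¹ ξ u)' = u⁻¹ ξ' u + [u⁻¹ ξ u, u⁻¹ u']`, and the extra commutator is the contribution of the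
term `u⁻¹ du` to the transport law.
-/

section Units

variable {𝕜 E 𝔸 : Type*} [NontriviallyNormedField 𝕜] [NormedAddCommGroup E] [NormedSpace 𝕜 E]
  [NormedRing 𝔸] [NormedAlgebra 𝕜 𝔸] [HasSummableGeomSeries 𝔸]

theorem hasFDerivAt_units_inv {u : E → 𝔸ˣ} {u' : E →L[𝕜] 𝔸} {x : E}
    (hu : HasFDerivAt (fun y => (u y : 𝔸)) u' x) :
    HasFDerivAt (fun y => (↑(u y)⁻¹ : 𝔸))
      (-(ContinuousLinearMap.mulLeftRight 𝕜 𝔸 ↑(u x)⁻¹ ↑(u x)⁻¹ ∘L u')) x := by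
  simpa only [Function.comp_def, Ring.inverse_unit, ContinuousLinearMap.neg_comp]
    using (hasFDerivAt_ringInverse (𝕜 := 𝕜) (u x)).comp x hu

theorem hasDerivAt_units_conj {u : 𝕜 → 𝔸ˣ} {ξ : 𝕜 → 𝔸} {u' ξ' : 𝔸} {t : 𝕜}
    (hu : HasDerivAt (fun s => (u s : 𝔸)) u' t) (hξ : HasDerivAt ξ ξ' t) :
    HasDerivAt (fun s => ↑(u s)⁻¹ * ξ s * ↑(u s))
      (↑(u t)⁻¹ * ξ' * ↑(u t) + ((↑(u t)⁻¹ * ξ t * ↑(u t)) * (↑(u t)⁻¹ * u')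
        - (↑(u t)⁻¹ * u') * (↑(u t)⁻¹ * ξ t * ↑(u t)))) t := by
  have hinv : HasDerivAt (fun s => (↑(u s)⁻¹ : 𝔸)) (-(↑(u t)⁻¹ * u' * ↑(u t)⁻¹)) t := by
    simpa using (hasFDerivAt_units_inv hu.hasFDerivAt).hasDerivAt
  refine ((hinv.fun_mul hξ).fun_mul hu).congr_deriv ?_
  simp only [mul_assoc, Units.mul_inv_cancel_left, neg_mul, add_mul]
  abel

end Units

section Gauge

variable {𝕜 E 𝔸 : Type*} [NontriviallyNormedField 𝕜] [NormedAddCommGroup E] [NormedSpace 𝕜 E]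
  [NormedRing 𝔸] [NormedAlgebra 𝕜 𝔸]

/-- The curvature `dA + A ∧ A` of an `𝔸`-valued one-form `A` on a normed space, as a bilinear map:
its value on `v, w` is `∂_v A(w) - ∂_w A(v) + A(v) A(w) - A(w) A(v)`. -/
noncomputable def curvature (A : E → E →L[𝕜] 𝔸) (x : E) : E →L[𝕜] E →L[𝕜] 𝔸 :=
  fderiv 𝕜 A x - (fderiv 𝕜 A x).flip
    + (ContinuousLinearMap.mul 𝕜 𝔸).bilinearComp (A x) (A x)
    - ((ContinuousLinearMap.mul 𝕜 𝔸).bilinearComp (A x) (A x)).flip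

theorem curvature_apply (A : E → E →L[𝕜] 𝔸) (x v w : E) :
    curvature A x v w =
      fderiv 𝕜 A x v w - fderiv 𝕜 A x w v + A x v * A x w - A x w * A x v :=
  rfl

/-- The transform `u⁻¹ du + u⁻¹ A u` of a one-form `A` by a gauge `u` with values in the units
of `𝔸`. -/
noncomputable def gaugeTransform (u : E → 𝔸ˣ) (A : E → E →L[𝕜] 𝔸) (x : E) : E →L[𝕜] 𝔸 :=
  ContinuousLinearMap.mul 𝕜 𝔸 ↑(u x)⁻¹ ∘L fderiv 𝕜 (fun y => (u y : 𝔸)) x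
    + ContinuousLinearMap.mulLeftRight 𝕜 𝔸 ↑(u x)⁻¹ ↑(u x) ∘L A x

theorem gaugeTransform_apply (u : E → 𝔸ˣ) (A : E → E →L[𝕜] 𝔸) (x v : E) :
    gaugeTransform u A x v =
      ↑(u x)⁻¹ * fderiv 𝕜 (fun y => (u y : 𝔸)) x v + ↑(u x)⁻¹ * A x v * ↑(u x) :=
  rfl

theorem fderiv_clm_apply_const {F : Type*} [NormedAddCommGroup F] [NormedSpace 𝕜 F]
    {A : E → E →L[𝕜] F} {x : E} (hA : DifferentiableAt 𝕜 A x) (v w : E) :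
    fderiv 𝕜 (fun y => A y w) x v = fderiv 𝕜 A x v w := by
  simp [fderiv_clm_apply hA (differentiableAt_const w)]

variable [HasSummableGeomSeries 𝔸] {u : E → 𝔸ˣ} {A : E → E →L[𝕜] 𝔸} {x : E}

theorem differentiableAt_gaugeTransform (hu : ContDiffAt 𝕜 2 (fun y => (u y : 𝔸)) x)
    (hA : DifferentiableAt 𝕜 A x) : DifferentiableAt 𝕜 (gaugeTransform u A) x := by
  have hu₁ : DifferentiableAt 𝕜 (fun y => (u y : 𝔸)) x := hu.differentiableAt two_ne_zero
  have hu₂ : DifferentiableAt 𝕜 (fderiv 𝕜 fun y => (u y : 𝔸)) x :=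
    (hu.fderiv_right (m := 1) le_rfl).differentiableAt one_ne_zero
  have hinv : DifferentiableAt 𝕜 (fun y => (↑(u y)⁻¹ : 𝔸)) x :=
    (hasFDerivAt_units_inv hu₁.hasFDerivAt).differentiableAt
  unfold gaugeTransform
  fun_prop

theorem fderiv_gaugeTransform_apply (hu : ContDiffAt 𝕜 2 (fun y => (u y : 𝔸)) x)
    (hA : DifferentiableAt 𝕜 A x) (v w : E) :
    fderiv 𝕜 (gaugeTransform u A) x v w =
      ↑(u x)⁻¹ * fderiv 𝕜 (fderiv 𝕜 fun y => (u y : 𝔸)) x v w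
        + ↑(u x)⁻¹ * fderiv 𝕜 A x v w * ↑(u x)
        + ↑(u x)⁻¹ * A x w * fderiv 𝕜 (fun y => (u y : 𝔸)) x v
        - ↑(u x)⁻¹ * fderiv 𝕜 (fun y => (u y : 𝔸)) x v * gaugeTransform u A x w := by
  have hu₁ : DifferentiableAt 𝕜 (fun y => (u y : 𝔸)) x := hu.differentiableAt two_ne_zero
  have hu₂ : DifferentiableAt 𝕜 (fderiv 𝕜 fun y => (u y : 𝔸)) x :=
    (hu.fderiv_right (m := 1) le_rfl).differentiableAt one_ne_zero
  have hinv := hasFDerivAt_units_inv hu₁.hasFDerivAt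
  have hd : HasFDerivAt (fun y => fderiv 𝕜 (fun z => (u z : 𝔸)) y w) _ x :=
    hu₂.hasFDerivAt.clm_apply (hasFDerivAt_const w x)
  have hAw : HasFDerivAt (fun y => A y w) _ x := hA.hasFDerivAt.clm_apply (hasFDerivAt_const w x)
  have hprod := (hinv.mul' hd).add ((hinv.mul' hAw).mul' hu₁.hasFDerivAt)
  rw [← fderiv_clm_apply_const (differentiableAt_gaugeTransform hu hA)]
  refine (congrArg (· v) hprod.fderiv).trans ?_
  simp only [ContinuousLinearMap.comp_zero, zero_add, smul_neg, Pi.mul_apply, smul_add,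
    _root_.add_apply, _root_.smul_apply, ContinuousLinearMap.flip_apply, smul_eq_mul,
    _root_.neg_apply, ContinuousLinearMap.comp_apply, ContinuousLinearMap.mulLeftRight_apply,
    mul_assoc, MulOpposite.smul_eq_mul_unop, MulOpposite.unop_op, gaugeTransform_apply, mul_add]
  abel

theorem curvature_gaugeTransform [IsRCLikeNormedField 𝕜]
    (hu : ContDiffAt 𝕜 2 (fun y => (u y : 𝔸)) x)
    (hA : DifferentiableAt 𝕜 A x) (v w : E) :
    curvature (gaugeTransform u A) x v w = ↑(u x)⁻¹ * curvature A x v w * ↑(u x) := by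
  have hsymm := (hu.isSymmSndFDerivAt (by simp)).eq v w
  simp only [curvature_apply, fderiv_gaugeTransform_apply hu hA, hsymm, gaugeTransform_apply,
    mul_add, add_mul, mul_sub, sub_mul, mul_assoc, Units.mul_inv_cancel_left]
  abel

end Gauge

section Wong

variable {E 𝔸 : Type*} [NormedAddCommGroup E] [NormedSpace ℝ E]
  [NormedRing 𝔸] [NormedAlgebra ℝ 𝔸]

/-- Wong's equations for a trajectory `γ` with velocity `γ'` and acceleration `γ''` and a charge
`ξ`, in a flat metric `g` and with the pairing `B` on the Lie algebra `𝔸`: the force law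
`g(γ'', w) = B(F(w, γ'), ξ)` and the transport law `ξ' = [ξ, A(γ')]`. -/
structure IsWongSolution (g : LinearMap.BilinForm ℝ E) (B : LinearMap.BilinForm ℝ 𝔸)
    (A : E → E →L[ℝ] 𝔸) (γ γ' γ'' : ℝ → E) (ξ : ℝ → 𝔸) : Prop where
  velocity (t : ℝ) : HasDerivAt γ (γ' t) t
  acceleration (t : ℝ) : HasDerivAt γ' (γ'' t) t
  force (t : ℝ) (w : E) : g (γ'' t) w = B (curvature A (γ t) w (γ' t)) (ξ t)
  charge (t : ℝ) : HasDerivAt ξ (ξ t * A (γ t) (γ' t) - A (γ t) (γ' t) * ξ t) t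

theorem isWongSolution_gaugeTransform [HasSummableGeomSeries 𝔸]
    {g : LinearMap.BilinForm ℝ E} {B : LinearMap.BilinForm ℝ 𝔸} {A : E → E →L[ℝ] 𝔸}
    {γ γ' γ'' : ℝ → E} {ξ : ℝ → 𝔸} (h : IsWongSolution g B A γ γ' γ'' ξ)
    (hA : ∀ t, DifferentiableAt ℝ A (γ t))
    {u : E → 𝔸ˣ} (hu : ∀ t, ContDiffAt ℝ 2 (fun x => (u x : 𝔸)) (γ t))
    (hB : ∀ t X Y, B (↑(u (γ t))⁻¹ * X * ↑(u (γ t))) (↑(u (γ t))⁻¹ * Y * ↑(u (γ t))) = B X Y) :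
    IsWongSolution g B (gaugeTransform u A) γ γ' γ''
      (fun t => ↑(u (γ t))⁻¹ * ξ t * ↑(u (γ t))) where
  velocity := h.velocity
  acceleration := h.acceleration
  force t w := by rw [h.force, curvature_gaugeTransform (hu t) (hA t), hB]
  charge t := by
    have huγ := ((hu t).differentiableAt two_ne_zero).hasFDerivAt.comp_hasDerivAt t (h.velocity t)
    convert hasDerivAt_units_conj (u := fun s => u (γ s)) huγ (h.charge t) using 1
    simp only [gaugeTransform_apply, mul_add, add_mul, mul_sub, sub_mul, mul_assoc,
      Units.mul_inv_cancel_left]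
    abel

end Wong

section Coordinates

variable {ι V 𝔸 : Type*} [Fintype ι] [NormedAddCommGroup V] [NormedSpace ℝ V]
  [NormedRing 𝔸] [NormedAlgebra ℝ 𝔸]

theorem map_eq_sum_single [DecidableEq ι] {M G : Type*} [AddCommMonoid M] [Module ℝ M]
    [FunLike G (ι → ℝ) M] [LinearMapClass G ℝ (ι → ℝ) M] (L : G) (v : ι → ℝ) :
    L v = ∑ i, v i • L (Pi.single i 1) := by
  conv_lhs => rw [pi_eq_sum_univ' v]
  simp only [map_sum, map_smul]

/-- The one-form `∑ i, a i dxⁱ` on `ℝ^ι` with components `a i`. -/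
noncomputable def oneFormOfComponents (a : ι → (ι → ℝ) → V) (x : ι → ℝ) : (ι → ℝ) →L[ℝ] V :=
  ∑ i, (ContinuousLinearMap.proj i : (ι → ℝ) →L[ℝ] ℝ).smulRight (a i x)

theorem differentiable_oneFormOfComponents {a : ι → (ι → ℝ) → V}
    (ha : ∀ i, Differentiable ℝ (a i)) : Differentiable ℝ (oneFormOfComponents a) := by
  unfold oneFormOfComponents
  fun_prop

variable [DecidableEq ι]

theorem oneFormOfComponents_single (a : ι → (ι → ℝ) → V) (x : ι → ℝ) (i : ι) :
    oneFormOfComponents a x (Pi.single i 1) = a i x := by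
  simp [oneFormOfComponents, Pi.single_apply]

theorem isWongSolution_iff_components {B : LinearMap.BilinForm ℝ 𝔸}
    {A : (ι → ℝ) → (ι → ℝ) →L[ℝ] 𝔸} (hA : Differentiable ℝ A) {a : ι → (ι → ℝ) → 𝔸}
    (ha : ∀ i x, a i x = A x (Pi.single i 1)) {F : ι → ι → (ι → ℝ) → 𝔸}
    (hF : ∀ i j x, F i j x = fderiv ℝ (a j) x (Pi.single i 1) - fderiv ℝ (a i) x (Pi.single j 1)
      + a i x * a j x - a j x * a i x) {γ γ' γ'' : ℝ → ι → ℝ} {ξ : ℝ → 𝔸} :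
    IsWongSolution (dotProductBilin ℝ ℝ) B A γ γ' γ'' ξ ↔
      (∀ t, HasDerivAt γ (γ' t) t) ∧ (∀ t, HasDerivAt γ' (γ'' t) t) ∧
      (∀ t i, γ'' t i = ∑ j, B (F i j (γ t)) (ξ t) * γ' t j) ∧
      ∀ t, HasDerivAt ξ
        (ξ t * (∑ i, γ' t i • a i (γ t)) - (∑ i, γ' t i • a i (γ t)) * ξ t) t := by
  have hcharge (t : ℝ) : A (γ t) (γ' t) = ∑ i, γ' t i • a i (γ t) := by
    simp only [ha, ← map_eq_sum_single]
  have hcurv (i j : ι) (x : ι → ℝ) :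
      F i j x = curvature A x (Pi.single i 1) (Pi.single j 1) := by
    simp only [hF, funext (ha _), fderiv_clm_apply_const (hA x), curvature_apply]
  have hforce (t : ℝ) (i : ι) : ∑ j, B (F i j (γ t)) (ξ t) * γ' t j =
      B (curvature A (γ t) (Pi.single i 1) (γ' t)) (ξ t) := by
    simp only [hcurv, map_eq_sum_single (curvature A (γ t) (Pi.single i 1)) (γ' t), map_sum,
      map_smul, LinearMap.sum_apply, LinearMap.smul_apply, smul_eq_mul, mul_comm]
  simp only [hforce, ← hcharge]
  refine ⟨fun h => ⟨h.velocity, h.acceleration, fun t i => ?_, h.charge⟩,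
    fun ⟨hγ, hγ', hγ'', hξ⟩ => ⟨hγ, hγ', fun t w => ?_, hξ⟩⟩
  · simpa using h.force t (Pi.single i 1)
  · simp only [map_eq_sum_single (curvature A (γ t)) w, dotProductBilin_apply_apply, dotProduct,
      hγ'', map_sum, map_smul, LinearMap.sum_apply, LinearMap.smul_apply, _root_.sum_apply,
      _root_.smul_apply, smul_eq_mul, mul_comm]

theorem wong_gauge_covariance_general [HasSummableGeomSeries 𝔸] {B : LinearMap.BilinForm ℝ 𝔸}
    {a : ι → (ι → ℝ) → 𝔸} (ha : ∀ i, Differentiable ℝ (a i)) {F : ι → ι → (ι → ℝ) → 𝔸}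
    (hF : ∀ i j x, F i j x = fderiv ℝ (a j) x (Pi.single i 1) - fderiv ℝ (a i) x (Pi.single j 1)
      + a i x * a j x - a j x * a i x) {γ γ' γ'' : ℝ → ι → ℝ} {ξ : ℝ → 𝔸}
    (hγ : ∀ t, HasDerivAt γ (γ' t) t) (hγ' : ∀ t, HasDerivAt γ' (γ'' t) t)
    (hforce : ∀ t i, γ'' t i = ∑ j, B (F i j (γ t)) (ξ t) * γ' t j)
    (hcharge : ∀ t, HasDerivAt ξ
      (ξ t * (∑ i, γ' t i • a i (γ t)) - (∑ i, γ' t i • a i (γ t)) * ξ t) t)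
    {u : (ι → ℝ) → 𝔸ˣ} (hu : ContDiff ℝ 2 fun x => (u x : 𝔸))
    (hB : ∀ x X Y, B (↑(u x)⁻¹ * X * ↑(u x)) (↑(u x)⁻¹ * Y * ↑(u x)) = B X Y)
    {b : ι → (ι → ℝ) → 𝔸}
    (hb : ∀ i x, b i x = ↑(u x)⁻¹ * fderiv ℝ (fun y => (u y : 𝔸)) x (Pi.single i 1)
      + ↑(u x)⁻¹ * a i x * ↑(u x)) {G : ι → ι → (ι → ℝ) → 𝔸}
    (hG : ∀ i j x, G i j x = fderiv ℝ (b j) x (Pi.single i 1) - fderiv ℝ (b i) x (Pi.single j 1)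
      + b i x * b j x - b j x * b i x)
    {η : ℝ → 𝔸} (hη : ∀ t, η t = ↑(u (γ t))⁻¹ * ξ t * ↑(u (γ t))) :
    (∀ t i, γ'' t i = ∑ j, B (G i j (γ t)) (η t) * γ' t j) ∧
    ∀ t, HasDerivAt η
      (η t * (∑ i, γ' t i • b i (γ t)) - (∑ i, γ' t i • b i (γ t)) * η t) t := by
  obtain rfl : η = fun t => ↑(u (γ t))⁻¹ * ξ t * ↑(u (γ t)) := funext hη
  have hA : Differentiable ℝ (oneFormOfComponents a) := differentiable_oneFormOfComponents ha
  have hA' : Differentiable ℝ (gaugeTransform u (oneFormOfComponents a)) := fun x =>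
    differentiableAt_gaugeTransform hu.contDiffAt (hA x)
  have hb' (i x) : b i x = gaugeTransform u (oneFormOfComponents a) x (Pi.single i 1) := by
    rw [gaugeTransform_apply, oneFormOfComponents_single, hb]
  have hsol : IsWongSolution (dotProductBilin ℝ ℝ) B (oneFormOfComponents a) γ γ' γ'' ξ :=
    (isWongSolution_iff_components hA (fun i x => (oneFormOfComponents_single a x i).symm) hF).2
      ⟨hγ, hγ', hforce, hcharge⟩
  exact ((isWongSolution_iff_components hA' hb' hG).1 <| isWongSolution_gaugeTransform hsol
    (fun t => hA (γ t)) (fun _ => hu.contDiffAt) fun t => hB (γ t)).2.2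

end Coordinates

section Frobenius

/-- The Frobenius pairing `⟨X, Y⟩ = trace (Xᵀ Y)` of matrices. -/
def frobeniusForm (m R : Type*) [Fintype m] [CommSemiring R] :
    LinearMap.BilinForm R (Matrix m m R) :=
  LinearMap.mk₂ R (fun X Y => trace (Xᵀ * Y))
    (by simp [add_mul]) (by simp) (by simp [mul_add]) (by simp)

theorem frobeniusForm_conj {m R : Type*} [Fintype m] [DecidableEq m] [CommSemiring R]
    {u : Matrix m m R} (hu : u * uᵀ = 1) (X Y : Matrix m m R) :
    frobeniusForm m R (uᵀ * X * u) (uᵀ * Y * u) = frobeniusForm m R X Y := by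
  calc trace ((uᵀ * X * u)ᵀ * (uᵀ * Y * u))
      = trace (uᵀ * (Xᵀ * (u * uᵀ) * Y * u)) := by
        simp only [transpose_mul, transpose_transpose, Matrix.mul_assoc]
    _ = trace (Xᵀ * Y) := by
        rw [trace_mul_comm, hu, Matrix.mul_one, Matrix.mul_assoc, hu, Matrix.mul_one]

-- The entrywise sup norm is not submultiplicative, so the algebra structure on matrices is taken
-- from the `L∞` operator norm, which induces the same topology and hence the same derivatives.
theorem contDiff_linftyOp {E m : Type*} [NormedAddCommGroup E] [NormedSpace ℝ E] [Fintype m]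
    {k : WithTop ℕ∞} {f : E → Matrix m m ℝ} (hf : ContDiff ℝ k f) :
    @ContDiff ℝ _ E _ _ (Matrix m m ℝ) Matrix.linftyOpNormedAddCommGroup
      Matrix.linftyOpNormedSpace k f :=
  @ContDiff.continuousLinearMap_comp ℝ E (Matrix m m ℝ) (Matrix m m ℝ) _ _ _ _ _
    Matrix.linftyOpNormedAddCommGroup Matrix.linftyOpNormedSpace k f
    (ContinuousLinearMap.id ℝ (Matrix m m ℝ)) hf

open scoped Matrix.Norms.Operator in
theorem hasSummableGeomSeries_linftyOp (m : Type*) [Fintype m] [DecidableEq m] :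
    HasSummableGeomSeries (Matrix m m ℝ) :=
  have : CompleteSpace (Matrix m m ℝ) := FiniteDimensional.complete ℝ _
  inferInstance

end Frobenius

/-- Gauge covariance of Wong's equations in the Euclidean model with the Frobenius
pairing `⟨X,Y⟩ = trace(Xᵀ Y)`: if `(γ, ξ)` solves Wong's equations for `A` and `u` is an
orthogonal gauge, then `(γ, ξ̃)` with `ξ̃ = uᵀ ξ u` along `γ` solves Wong's equations for
the gauge-transformed potential `Ã = uᵀ du + uᵀ A u`. -/
theorem wong_gauge_covariance {n d : ℕ}
    (A : Fin n → (Fin n → ℝ) → Matrix (Fin d) (Fin d) ℝ)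
    (hA : ∀ i, ContDiff ℝ 1 (A i))
    (F : Fin n → Fin n → (Fin n → ℝ) → Matrix (Fin d) (Fin d) ℝ)
    (hF : ∀ i j x, F i j x =
      pder i (A j) x - pder j (A i) x + A i x * A j x - A j x * A i x)
    (γ γ' γ'' : ℝ → Fin n → ℝ)
    (hγ : ∀ t, HasDerivAt γ (γ' t) t)
    (hγ' : ∀ t, HasDerivAt γ' (γ'' t) t)
    (ξ : ℝ → Matrix (Fin d) (Fin d) ℝ)
    (hWong1 : ∀ (t : ℝ) (i : Fin n),
      γ'' t i = ∑ j, Matrix.trace ((F i j (γ t))ᵀ * ξ t) * γ' t j)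
    (hWong2 : ∀ t : ℝ, HasDerivAt ξ
      (ξ t * (∑ i, γ' t i • A i (γ t)) - (∑ i, γ' t i • A i (γ t)) * ξ t) t)
    (u : (Fin n → ℝ) → Matrix (Fin d) (Fin d) ℝ)
    (hu : ContDiff ℝ 2 u)
    (huorth : ∀ x, (u x)ᵀ * u x = 1)
    (At : Fin n → (Fin n → ℝ) → Matrix (Fin d) (Fin d) ℝ)
    (hAt : ∀ i x, At i x = (u x)ᵀ * pder i u x + (u x)ᵀ * A i x * u x)
    (Ft : Fin n → Fin n → (Fin n → ℝ) → Matrix (Fin d) (Fin d) ℝ)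
    (hFt : ∀ i j x, Ft i j x =
      pder i (At j) x - pder j (At i) x + At i x * At j x - At j x * At i x)
    (ξt : ℝ → Matrix (Fin d) (Fin d) ℝ)
    (hξt : ∀ t, ξt t = (u (γ t))ᵀ * ξ t * u (γ t)) :
    (∀ (t : ℝ) (i : Fin n),
      γ'' t i = ∑ j, Matrix.trace ((Ft i j (γ t))ᵀ * ξt t) * γ' t j) ∧
    (∀ t : ℝ, HasDerivAt ξt
      (ξt t * (∑ i, γ' t i • At i (γ t)) - (∑ i, γ' t i • At i (γ t)) * ξt t) t) := by
  let := Matrix.linftyOpNormedRing (n := Fin d) (α := ℝ)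
  let := Matrix.linftyOpNormedAlgebra (n := Fin d) (R := ℝ) (α := ℝ)
  have := hasSummableGeomSeries_linftyOp (Fin d)
  have huorth' (x) : u x * (u x)ᵀ = 1 := mul_eq_one_comm.1 (huorth x)
  exact wong_gauge_covariance_general (B := frobeniusForm (Fin d) ℝ)
    (u := fun x => ⟨u x, (u x)ᵀ, huorth' x, huorth x⟩)
    (fun i => (hA i).differentiable one_ne_zero) hF hγ hγ' hWong1 hWong2
    (contDiff_linftyOp hu) (fun x => frobeniusForm_conj (huorth' x)) hAt hFt hξt
end

section
/- Let Ω ⊆ ℝⁿ be an open connected set, let A : Ω → (ℝⁿ →L[ℝ] Matrix d d ℝ) be continuous (a continuous matrix-valued 1-form), and let w : Ω → Matrix d d ℝ be differentiable on Ω with Fréchet derivative satisfying (Dw)(x)(h) = w(x)·(A(x)(h)) − (A(x)(h))·w(x) for every x ∈ Ω and h ∈ ℝⁿ. If w(z₀) = 1 (the identity matrix) for some z₀ ∈ Ω, then w(x) = 1 for all x ∈ Ω. -/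
attribute [local instance] Matrix.normedAddCommGroup Matrix.normedSpace

/-!
In the trivial bundle with fibre the matrix algebra, the solutions of `dw = wA - Aw` are the
parallel sections of a connection, and the constant section `1` is one of them. The difference `g`
of two parallel sections satisfies `‖Dg‖ ≤ C ‖g‖` near every point, so by Grönwall's inequality
along segments it vanishes near each of its zeros; hence its zero set in `Ω` is open as well as
relatively closed.
-/

open Asymptotics Filter Set Topology

section

variable {E F : Type*} [NormedAddCommGroup E] [NormedSpace ℝ E]
  [NormedAddCommGroup F] [NormedSpace ℝ F] {s : Set E} {g : E → F} {g' : E → E →L[ℝ] F} {x : E}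

theorem eqOn_zero_of_norm_fderivWithin_le_mul_norm (hs : Convex ℝ s)
    (hg : ∀ y ∈ s, HasFDerivWithinAt g (g' y) s y) {K : ℝ} (bound : ∀ y ∈ s, ‖g' y‖ ≤ K * ‖g y‖)
    (hx : x ∈ s) (hgx : g x = 0) : EqOn g 0 s := by
  intro y hy
  let γ : ℝ → E := AffineMap.lineMap x y
  have hγ : MapsTo γ (Icc 0 1) s := hs.mapsTo_lineMap hx hy
  have hderiv (t : ℝ) (ht : t ∈ Icc 0 1) :
      HasDerivWithinAt (g ∘ γ) (g' (γ t) (y - x)) (Icc 0 1) t :=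
    (hg _ (hγ ht)).comp_hasDerivWithinAt t AffineMap.hasDerivWithinAt_lineMap hγ
  have hderiv_right (t : ℝ) (ht : t ∈ Ico 0 1) :
      HasDerivWithinAt (g ∘ γ) (g' (γ t) (y - x)) (Ici t) t :=
    (hderiv t (Ico_subset_Icc_self ht)).mono_of_mem_nhdsWithin (Icc_mem_nhdsGE_of_mem ht)
  have hbound (t : ℝ) (ht : t ∈ Ico 0 1) :
      ‖g' (γ t) (y - x)‖ ≤ K * ‖y - x‖ * ‖(g ∘ γ) t‖ :=
    calc
      ‖g' (γ t) (y - x)‖ ≤ ‖g' (γ t)‖ * ‖y - x‖ := (g' (γ t)).le_opNorm _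
      _ ≤ K * ‖g (γ t)‖ * ‖y - x‖ := by gcongr; exact bound _ (hγ (Ico_subset_Icc_self ht))
      _ = K * ‖y - x‖ * ‖(g ∘ γ) t‖ := mul_right_comm _ _ _
  simpa [γ] using eq_zero_of_abs_deriv_le_mul_abs_self_of_eq_zero_right
    (HasDerivWithinAt.continuousOn hderiv) hderiv_right (by simpa [γ] using hgx) hbound
    1 (right_mem_Icc.2 zero_le_one)

theorem eventually_eq_zero_iff_of_fderiv_isBigO (hg : ∀ᶠ y in 𝓝 x, HasFDerivAt g (g' y) y)
    (hg' : g' =O[𝓝 x] g) : ∀ᶠ y in 𝓝 x, g x = 0 ↔ g y = 0 := by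
  obtain ⟨K, hK⟩ := hg'.bound
  obtain ⟨r, hr, hball⟩ := Metric.eventually_nhds_iff_ball.1 (hg.and hK)
  have zero_propagates {y z : E} (hy : y ∈ Metric.ball x r) (hz : z ∈ Metric.ball x r)
      (hgy : g y = 0) : g z = 0 :=
    eqOn_zero_of_norm_fderivWithin_le_mul_norm (convex_ball x r)
      (fun p hp => (hball p hp).1.hasFDerivWithinAt) (fun p hp => (hball p hp).2) hy hgy hz
  have hx : x ∈ Metric.ball x r := Metric.mem_ball_self hr
  filter_upwards [Metric.ball_mem_nhds x hr] with y hy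
  exact ⟨zero_propagates hx hy, zero_propagates hy hx⟩

theorem eqOn_zero_of_fderiv_isBigO (hso : IsOpen s) (hs : IsPreconnected s)
    (hg : ∀ y ∈ s, HasFDerivAt g (g' y) y) (hg' : ∀ y ∈ s, g' =O[𝓝 y] g)
    (hx : x ∈ s) (hgx : g x = 0) : EqOn g 0 s := by
  have hlocal (y : E) (hy : y ∈ s) : ∀ᶠ z in 𝓝[s] y, g y = 0 ↔ g z = 0 :=
    (eventually_eq_zero_iff_of_fderiv_isBigO
      (eventually_of_mem (hso.mem_nhds hy) hg) (hg' y hy)).filter_mono nhdsWithin_le_nhds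
  intro y hy
  exact (hs.induction₂ (fun p q => g p = 0 ↔ g q = 0) hlocal
    (fun _ _ _ _ _ _ => Iff.trans) (fun _ _ _ _ => Iff.symm) hx hy).1 hgx

theorem gauge_uniqueness_general (hso : IsOpen s) (hs : IsPreconnected s)
    {Γ : E → E →L[ℝ] F →L[ℝ] F} (hΓ : ∀ y ∈ s, Γ =O[𝓝 y] (fun _ => (1 : ℝ))) {u v : E → F}
    (hu : ∀ y ∈ s, HasFDerivAt u ((Γ y).flip (u y)) y)
    (hv : ∀ y ∈ s, HasFDerivAt v ((Γ y).flip (v y)) y)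
    (hx : x ∈ s) (huv : u x = v x) : EqOn u v s := by
  have hsub (y : E) (hy : y ∈ s) : HasFDerivAt (u - v) ((Γ y).flip ((u - v) y)) y := by
    simpa only [Pi.sub_apply, map_sub] using (hu y hy).sub (hv y hy)
  have hbigO (y : E) (hy : y ∈ s) : (fun z => (Γ z).flip ((u - v) z)) =O[𝓝 y] (u - v) := by
    obtain ⟨C, hC⟩ := (hΓ y hy).bound
    refine .of_bound C (hC.mono fun z hz => ?_)
    calc
      ‖(Γ z).flip ((u - v) z)‖ ≤ ‖Γ z‖ * ‖(u - v) z‖ := by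
        simpa only [ContinuousLinearMap.opNorm_flip] using (Γ z).flip.le_opNorm ((u - v) z)
      _ ≤ C * ‖(u - v) z‖ := by gcongr; simpa using hz
  intro y hy
  exact sub_eq_zero.1 <|
    eqOn_zero_of_fderiv_isBigO hso hs hsub hbigO hx (sub_eq_zero.2 huv) hy

end

/-- The bounded bilinear map `(a, w) ↦ w * a - a * w`, which gives the linear equation
`dw = wA - Aw` its coefficient. The value of the one-form comes first. -/
noncomputable def matrixCommutator (m : Type*) [Fintype m] :
    Matrix m m ℝ →L[ℝ] Matrix m m ℝ →L[ℝ] Matrix m m ℝ :=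
  ((LinearMap.mul ℝ (Matrix m m ℝ)).flip - LinearMap.mul ℝ (Matrix m m ℝ)).toContinuousBilinearMap

theorem matrixCommutator_apply {m : Type*} [Fintype m] (a w : Matrix m m ℝ) :
    matrixCommutator m a w = w * a - a * w :=
  rfl

theorem matrixCommutator_apply_one {m : Type*} [Fintype m] [DecidableEq m] (a : Matrix m m ℝ) :
    matrixCommutator m a 1 = 0 := by
  rw [matrixCommutator_apply, one_mul, mul_one, sub_self]

/-- Uniqueness for the gauge-gluing equation: a differentiable matrix-valued map `w` on a
connected open set `Ω ⊆ ℝⁿ` with `dw = wA − Aw` which equals the identity at one point is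
identically the identity on `Ω`. -/
theorem gauge_uniqueness {n d : ℕ}
    (Ω : Set (Fin n → ℝ)) (hΩo : IsOpen Ω) (hΩc : IsConnected Ω)
    (A : (Fin n → ℝ) → ((Fin n → ℝ) →L[ℝ] Matrix (Fin d) (Fin d) ℝ))
    (hA : ContinuousOn A Ω)
    (w : (Fin n → ℝ) → Matrix (Fin d) (Fin d) ℝ)
    (hw : ∀ x ∈ Ω, DifferentiableAt ℝ w x)
    (hDw : ∀ x ∈ Ω, ∀ h : Fin n → ℝ,
      fderiv ℝ w x h = w x * A x h - A x h * w x)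
    (z₀ : Fin n → ℝ) (hz₀ : z₀ ∈ Ω) (hwz₀ : w z₀ = 1) :
    ∀ x ∈ Ω, w x = 1 := by
  refine gauge_uniqueness_general (Γ := fun x => matrixCommutator (Fin d) ∘L A x) hΩo
    hΩc.isPreconnected (fun x hx => ?_) (fun x hx => ?_) (fun x _ => ?_) hz₀ hwz₀
  · exact ((continuousOn_const.clm_comp hA).continuousAt (hΩo.mem_nhds hx)).tendsto.isBigO_one ℝ
  · exact (hw x hx).hasFDerivAt.congr_fderiv (ContinuousLinearMap.ext (hDw x hx))
  · exact (hasFDerivAt_const _ x).congr_fderiv <|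
      ContinuousLinearMap.ext fun h => (matrixCommutator_apply_one (A x h)).symm
end
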